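/- arXiv:1911.12001 — 2 statements merged into one kernel-verified Lean document; each statement's English description precedes it below -/
import Mathlib

section
/- Let A be n×n, B be n×m, C be m×n, D be m×m real matrices with D invertible, and let λ ∈ ℂ and v ∈ ℂⁿ be such that v ≠ 0 and (A − BD⁻¹C)v = λv (eigenvalue equation over ℂ for the complexified matrices). Define z = (v, −D⁻¹Cv) ∈ ℂ^{n+m}, J = [[A, B],[C, D]] and E = [[I_n, O],[O, O]]. Then z ≠ 0 and J z = λ E z. -/
open Matrix

/-- Lifting of eigenvectors of the reduced Jacobian `J_r = A − BD⁻¹C` to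
generalized eigenvectors of the pencil `(J, E)`: if `(A − BD⁻¹C)v = λv` over ℂ
with `v ≠ 0`, then `z = (v, −D⁻¹Cv)` satisfies `z ≠ 0` and `J z = λ E z`. -/
theorem reduced_eigvec_lifts (n m : ℕ)
    (A : Matrix (Fin n) (Fin n) ℝ) (B : Matrix (Fin n) (Fin m) ℝ)
    (C : Matrix (Fin m) (Fin n) ℝ) (D : Matrix (Fin m) (Fin m) ℝ)
    (hD : IsUnit D) (l : ℂ) (v : Fin n → ℂ) (hv : v ≠ 0)
    (heig : (A.map Complex.ofReal -
        B.map Complex.ofReal * (D.map Complex.ofReal)⁻¹ * C.map Complex.ofReal)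
        *ᵥ v = l • v) :
    Sum.elim v (-(((D.map Complex.ofReal)⁻¹ * C.map Complex.ofReal) *ᵥ v)) ≠ 0 ∧
    (Matrix.fromBlocks (A.map Complex.ofReal) (B.map Complex.ofReal)
        (C.map Complex.ofReal) (D.map Complex.ofReal)) *ᵥ
        Sum.elim v (-(((D.map Complex.ofReal)⁻¹ * C.map Complex.ofReal) *ᵥ v)) =
      l • ((Matrix.fromBlocks (1 : Matrix (Fin n) (Fin n) ℂ) 0 0
          (0 : Matrix (Fin m) (Fin m) ℂ)) *ᵥ
        Sum.elim v (-(((D.map Complex.ofReal)⁻¹ * C.map Complex.ofReal) *ᵥ v))) := by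
  have hD' : IsUnit (D.map Complex.ofReal).det :=
    (Matrix.isUnit_iff_isUnit_det _).1 (hD.map (Complex.ofRealHom.mapMatrix))
  refine ⟨fun h => hv (funext fun i => congrFun h (Sum.inl i)), ?_⟩
  rw [Matrix.fromBlocks_mulVec, Matrix.fromBlocks_mulVec]
  simp only [Sum.elim_comp_inl, Sum.elim_comp_inr, Matrix.mulVec_neg, Matrix.mulVec_mulVec,
    Matrix.one_mulVec, Matrix.zero_mulVec]
  -- The differential rows are the eigenvalue equation; in the algebraic rows `D * D⁻¹` cancels.
  rw [Matrix.mul_nonsing_inv_cancel_left _ _ hD', add_neg_cancel, ← Matrix.mul_assoc,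
    ← sub_eq_add_neg, ← Matrix.sub_mulVec, heig]
  ext (i | j) <;> simp
end

section
/- Let A be n×n, B be n×m, C be m×n, D be m×m real matrices, let P be an n×n real symmetric positive definite matrix, R an m×n real matrix, and Q an m×m real matrix. Define J = [[A, B],[C, D]] and Z = [[P, O],[R, Q]]. If F := JᵀZ + ZᵀJ is negative definite (wᵀFw < 0 for all nonzero real w), then D is invertible and every complex eigenvalue λ of the reduced Jacobian J_r = A − BD⁻¹C (i.e., every λ ∈ ℂ for which there exists v ≠ 0 with (A − BD⁻¹C)v = λv over ℂ) satisfies Re(λ) < 0. -/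
/-!
Since `wᵀ(JᵀZ + ZᵀJ)w = 2 (Jw) ⬝ (Zw)`, the hypothesis says `(Jw) ⬝ (Zw) < 0` for `w ≠ 0`, and for
`w = (x, y)` the first block of `Zw` is `Px`.

A nonzero `y` with `Dy = 0` would give `Jw ⬝ Zw = (By) ⬝ 0 + 0 ⬝ (Qy) = 0` at `w = (0, y)`, so `D` is
injective, hence invertible. With `y = -D⁻¹Cx` the second block of `Jw` vanishes and the first one
is `J_r x`, so `P` is a Lyapunov matrix for `J_r`: `(J_r x) ⬝ (Px) < 0` for all `x ≠ 0`. Adding this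
inequality for the real and the imaginary part of an eigenvector, the terms with the imaginary part
of the eigenvalue cancel by symmetry of `P`, which leaves `Re λ` times a positive number.
-/

open Matrix

/-- The quadratic form of `JᵀZ + ZᵀJ` at `w` is `2 (Jw) ⬝ (Zw)`. -/
lemma dotProduct_transpose_mul_add_mulVec {k : Type*} [Fintype k] (J Z : Matrix k k ℝ)
    (w : k → ℝ) : w ⬝ᵥ ((Jᵀ * Z + Zᵀ * J) *ᵥ w) = 2 * ((J *ᵥ w) ⬝ᵥ (Z *ᵥ w)) := by
  rw [add_mulVec, dotProduct_add, ← mulVec_mulVec, ← mulVec_mulVec, dotProduct_mulVec,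
    dotProduct_mulVec w Zᵀ, vecMul_transpose, vecMul_transpose, dotProduct_comm (Z *ᵥ w)]
  ring

/-- Lyapunov's criterion: a real matrix `M` that is dissipative for the inner product of a positive
definite `P` has all its complex eigenvalues in the open left half-plane. -/
lemma re_eigenvalue_neg_of_lyapunov {k : Type*} [Fintype k] (M P : Matrix k k ℝ)
    (hP : P.PosDef) (hM : ∀ x : k → ℝ, x ≠ 0 → (M *ᵥ x) ⬝ᵥ (P *ᵥ x) < 0)
    (l : ℂ) (v : k → ℂ) (hv : v ≠ 0) (hl : M.map Complex.ofReal *ᵥ v = l • v) : l.re < 0 := by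
  set a : k → ℝ := fun i => (v i).re with ha
  set b : k → ℝ := fun i => (v i).im with hb
  have h1 : M *ᵥ a = l.re • a - l.im • b := by
    ext i
    have := congrArg Complex.re (congrFun hl i)
    simpa [mulVec, dotProduct, a, b] using this
  have h2 : M *ᵥ b = l.re • b + l.im • a := by
    ext i
    have := congrArg Complex.im (congrFun hl i)
    simpa [mulVec, dotProduct, a, b] using this
  have hsymm : a ⬝ᵥ (P *ᵥ b) = b ⬝ᵥ (P *ᵥ a) := by
    have hPt : Pᵀ = P := by simpa using hP.isHermitian.eq
    rw [dotProduct_mulVec, ← mulVec_transpose, hPt, dotProduct_comm]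
  have hPx : ∀ x : k → ℝ, 0 ≤ x ⬝ᵥ (P *ᵥ x) := fun x => by
    simpa using hP.posSemidef.dotProduct_mulVec_nonneg x
  have hMx : ∀ x : k → ℝ, (M *ᵥ x) ⬝ᵥ (P *ᵥ x) ≤ 0 := fun x => by
    by_cases hx : x = 0
    · simp [hx]
    · exact (hM x hx).le
  have hab : a ≠ 0 ∨ b ≠ 0 := by
    by_contra! h
    exact hv (funext fun i => Complex.ext (congrFun h.1 i) (congrFun h.2 i))
  have hsum : (M *ᵥ a) ⬝ᵥ (P *ᵥ a) + (M *ᵥ b) ⬝ᵥ (P *ᵥ b) < 0 := by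
    rcases hab with h | h
    · linarith [hM _ h, hMx b]
    · linarith [hM _ h, hMx a]
  have heq : (M *ᵥ a) ⬝ᵥ (P *ᵥ a) + (M *ᵥ b) ⬝ᵥ (P *ᵥ b)
      = l.re * (a ⬝ᵥ (P *ᵥ a) + b ⬝ᵥ (P *ᵥ b)) := by
    rw [h1, h2]
    simp only [sub_dotProduct, add_dotProduct, smul_dotProduct, smul_eq_mul, hsymm]
    ring
  rw [heq] at hsum
  by_contra! h
  linarith [mul_nonneg h (add_nonneg (hPx a) (hPx b))]

/-- BMI-based sufficient condition for small-signal stability: if `P ≻ 0` and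
`F = JᵀZ + ZᵀJ ≺ 0` for `J = [[A,B],[C,D]]` and `Z = [[P,O],[R,Q]]`, then `D`
is invertible and every complex eigenvalue of the reduced Jacobian
`J_r = A − BD⁻¹C` has negative real part. -/
theorem bmi_sufficient_stability (n m : ℕ)
    (A : Matrix (Fin n) (Fin n) ℝ) (B : Matrix (Fin n) (Fin m) ℝ)
    (C : Matrix (Fin m) (Fin n) ℝ) (D : Matrix (Fin m) (Fin m) ℝ)
    (P : Matrix (Fin n) (Fin n) ℝ) (R : Matrix (Fin m) (Fin n) ℝ)
    (Q : Matrix (Fin m) (Fin m) ℝ) (hP : P.PosDef)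
    (hF : ∀ w : Fin n ⊕ Fin m → ℝ, w ≠ 0 →
      w ⬝ᵥ (((Matrix.fromBlocks A B C D)ᵀ * Matrix.fromBlocks P 0 R Q +
        (Matrix.fromBlocks P 0 R Q)ᵀ * Matrix.fromBlocks A B C D) *ᵥ w) < 0) :
    IsUnit D ∧
    ∀ (l : ℂ) (v : Fin n → ℂ), v ≠ 0 →
      (A - B * D⁻¹ * C).map Complex.ofReal *ᵥ v = l • v → l.re < 0 := by
  have key : ∀ (x : Fin n → ℝ) (y : Fin m → ℝ), (x ≠ 0 ∨ y ≠ 0) →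
      (A *ᵥ x + B *ᵥ y) ⬝ᵥ (P *ᵥ x) + (C *ᵥ x + D *ᵥ y) ⬝ᵥ (R *ᵥ x + Q *ᵥ y) < 0 := by
    intro x y hxy
    have hw : Sum.elim x y ≠ 0 := by
      intro h
      rcases hxy with hx | hy
      · exact hx (funext fun i => congrFun h (Sum.inl i))
      · exact hy (funext fun i => congrFun h (Sum.inr i))
    have := hF _ hw
    rw [dotProduct_transpose_mul_add_mulVec, fromBlocks_mulVec, fromBlocks_mulVec,
      sumElim_dotProduct_sumElim] at this
    simp only [Sum.elim_comp_inl, Sum.elim_comp_inr, zero_mulVec, add_zero] at this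
    linarith
  have hD : IsUnit D := by
    rw [← mulVec_injective_iff_isUnit]
    refine (injective_iff_map_eq_zero D.mulVecLin).2 fun y hy => ?_
    by_contra hne
    have hy' : D *ᵥ y = 0 := hy
    have := key 0 y (Or.inr hne)
    simp [hy'] at this
  refine ⟨hD, re_eigenvalue_neg_of_lyapunov _ P hP fun x hx => ?_⟩
  have := key x (-(D⁻¹ *ᵥ (C *ᵥ x))) (Or.inl hx)
  have hDD : D * D⁻¹ = 1 := mul_nonsing_inv D ((isUnit_iff_isUnit_det D).1 hD)
  have h0 : C *ᵥ x + D *ᵥ (-(D⁻¹ *ᵥ (C *ᵥ x))) = 0 := by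
    rw [mulVec_neg, mulVec_mulVec, hDD, one_mulVec, add_neg_cancel]
  rw [h0, zero_dotProduct, add_zero, mulVec_neg, ← sub_eq_add_neg] at this
  rwa [sub_mulVec, ← mulVec_mulVec, ← mulVec_mulVec]
end
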